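/- Assume at least one feasible association exists. Then the minimum average system delay over feasible associations, p* = min over feasible x of (Σ_{i ∈ L} λ_i T_i(x)) / (Σ_{i ∈ L} λ_i), satisfies p* = (q̂* − |B|) / (Σ_{i ∈ L} λ_i), where q̂* = min over feasible associations x of Σ_{j ∈ B} 1/(1 − ρ_j(x)). In particular, an association minimizes the average system delay if and only if it minimizes Σ_{j ∈ B} 1/(1 − ρ_j(x)) over feasible associations. (Equivalence of P_delay(2,K) and the load-based objective, from the proof of Theorem 3.) -/

import Mathlib

open Finset

/-- Load of base station `j` under association `x`: `ρ_j(x) = Σ_{i : x i = j} λ_i c_{ij}`. -/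
noncomputable def bsLoad {L B : Type*} [Fintype L] [DecidableEq B] (lam : L → ℝ)
    (c : L → B → ℝ) (x : L → B) (j : B) : ℝ :=
  ∑ i ∈ univ.filter (fun i => x i = j), lam i * c i j

/-- Average delay of class `i` under association `x`: `T_i(x) = c_{i,x(i)} / (1 − ρ_{x(i)}(x))`. -/
noncomputable def classDelay {L B : Type*} [Fintype L] [DecidableEq B] (lam : L → ℝ)
    (c : L → B → ℝ) (x : L → B) (i : L) : ℝ :=
  c i (x i) / (1 - bsLoad lam c x (x i))

/-- Maximum per-class delay `max_{i ∈ L} T_i(x)`. -/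
noncomputable def maxDelay {L B : Type*} [Fintype L] [DecidableEq B] [Nonempty L]
    (lam : L → ℝ) (c : L → B → ℝ) (x : L → B) : ℝ :=
  univ.sup' univ_nonempty (fun i => classDelay lam c x i)

/-!
The classes served by station `j` contribute `ρ_j / (1 - ρ_j) = 1 / (1 - ρ_j) - 1` to the total
delay `∑ λ_i T_i`. Summing over the stations, the average delay is the image of `∑ 1 / (1 - ρ_j)`
under one fixed increasing affine map, so the two objectives have corresponding minima.
-/

theorem sum_div_one_sub_eq_sum_one_div_sub_card {ι K : Type*} [DivisionRing K] (s : Finset ι)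
    {ρ : ι → K} (hρ : ∀ j ∈ s, ρ j ≠ 1) :
    ∑ j ∈ s, ρ j / (1 - ρ j) = ∑ j ∈ s, 1 / (1 - ρ j) - (#s : K) := by
  have summand (j : ι) (hj : j ∈ s) : ρ j / (1 - ρ j) = 1 / (1 - ρ j) - 1 := by
    have : 1 - ρ j ≠ 0 := sub_ne_zero.mpr (hρ j hj).symm
    rw [div_sub_one this, sub_sub_cancel]
  rw [sum_congr rfl summand, sum_sub_distrib, sum_const, nsmul_one]

section

variable {L B : Type*} [Fintype L] [Fintype B] [DecidableEq B] (lam : L → ℝ) (c : L → B → ℝ)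

theorem sum_mul_classDelay_eq_sum_bsLoad_div (x : L → B) :
    ∑ i, lam i * classDelay lam c x i = ∑ j, bsLoad lam c x j / (1 - bsLoad lam c x j) := by
  have fiber (j : B) : ∑ i with x i = j, lam i * classDelay lam c x i =
      bsLoad lam c x j / (1 - bsLoad lam c x j) := by
    calc ∑ i with x i = j, lam i * classDelay lam c x i
        = ∑ i with x i = j, lam i * c i j / (1 - bsLoad lam c x j) := by
          refine sum_congr rfl fun i hi => ?_
          rw [classDelay, (mem_filter.mp hi).2, mul_div_assoc]
      _ = bsLoad lam c x j / (1 - bsLoad lam c x j) := (sum_div ..).symm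
  rw [← sum_fiberwise univ x]
  exact sum_congr rfl fun j _ => fiber j

theorem sum_mul_classDelay_eq_sum_one_div_sub_card {x : L → B} (hx : ∀ j, bsLoad lam c x j ≠ 1) :
    ∑ i, lam i * classDelay lam c x i =
      ∑ j, 1 / (1 - bsLoad lam c x j) - (Fintype.card B : ℝ) := by
  rw [sum_mul_classDelay_eq_sum_bsLoad_div,
    sum_div_one_sub_eq_sum_one_div_sub_card univ fun j _ => hx j, card_univ]

theorem stmt13_general (hlam : 0 < ∑ i, lam i) (feasible : Set (L → B))
    (hload : ∀ x ∈ feasible, ∀ j, bsLoad lam c x j ≠ 1) {pstar qhat : ℝ}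
    (hp : IsLeast {v : ℝ | ∃ x ∈ feasible,
      v = (∑ i, lam i * classDelay lam c x i) / ∑ i, lam i} pstar)
    (hq : IsLeast {v : ℝ | ∃ x ∈ feasible, v = ∑ j, 1 / (1 - bsLoad lam c x j)} qhat) :
    pstar = (qhat - (Fintype.card B : ℝ)) / ∑ i, lam i ∧
      ∀ x ∈ feasible, ((∑ i, lam i * classDelay lam c x i) / ∑ i, lam i = pstar ↔
        ∑ j, 1 / (1 - bsLoad lam c x j) = qhat) := by
  let toDelay (q : ℝ) : ℝ := (q - Fintype.card B) / ∑ i, lam i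
  have toDelay_mono : StrictMono toDelay := fun _ _ h =>
    div_lt_div_of_pos_right (sub_lt_sub_right h _) hlam
  have delay_eq (x) (hx : x ∈ feasible) : (∑ i, lam i * classDelay lam c x i) / ∑ i, lam i =
      toDelay (∑ j, 1 / (1 - bsLoad lam c x j)) := by
    rw [sum_mul_classDelay_eq_sum_one_div_sub_card lam c (hload x hx)]
  have delay_min : IsLeast {v : ℝ | ∃ x ∈ feasible,
      v = (∑ i, lam i * classDelay lam c x i) / ∑ i, lam i} (toDelay qhat) := by
    obtain ⟨⟨y, hy, rfl⟩, qhat_le⟩ := hq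
    refine ⟨⟨y, hy, (delay_eq y hy).symm⟩, ?_⟩
    rintro _ ⟨x, hx, rfl⟩
    rw [delay_eq x hx]
    exact toDelay_mono.monotone (qhat_le ⟨x, hx, rfl⟩)
  have pstar_eq : pstar = toDelay qhat := hp.unique delay_min
  refine ⟨pstar_eq, fun x hx => ?_⟩
  rw [delay_eq x hx, pstar_eq, toDelay_mono.injective.eq_iff]

end

/-- Equivalence of `P_delay(2,K)` and the load-based objective (proof of Theorem 3):
the minimum average system delay `p*` over feasible associations satisfies
`p* = (q̂* − |B|) / Σ_i λ_i` where `q̂*` is the minimum over feasible associations of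
`Σ_j 1/(1 − ρ_j)`; and a feasible association minimizes the average system delay iff
it minimizes `Σ_j 1/(1 − ρ_j)`. -/
theorem stmt13 {L B : Type*} [Fintype L] [Fintype B] [DecidableEq B] [Nonempty L] [Nonempty B]
    (lam : L → ℝ) (hlam : ∀ i, 0 < lam i)
    (c : L → B → ℝ) (hc : ∀ i j, 0 < c i j)
    (ρbar : ℝ) (hρ0 : 0 < ρbar) (hρ1 : ρbar < 1)
    (hex : ∃ x : L → B, ∀ j : B, bsLoad lam c x j ≤ ρbar)
    (pstar qhat : ℝ)
    (hp : IsLeast {v : ℝ | ∃ x : L → B, (∀ j : B, bsLoad lam c x j ≤ ρbar) ∧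
      v = (∑ i : L, lam i * classDelay lam c x i) / (∑ i : L, lam i)} pstar)
    (hq : IsLeast {v : ℝ | ∃ x : L → B, (∀ j : B, bsLoad lam c x j ≤ ρbar) ∧
      v = ∑ j : B, 1 / (1 - bsLoad lam c x j)} qhat) :
    pstar = (qhat - (Fintype.card B : ℝ)) / (∑ i : L, lam i) ∧
      ∀ x : L → B, (∀ j : B, bsLoad lam c x j ≤ ρbar) →
        ((∑ i : L, lam i * classDelay lam c x i) / (∑ i : L, lam i) = pstar ↔
          (∑ j : B, 1 / (1 - bsLoad lam c x j)) = qhat) := by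
  exact stmt13_general lam c (sum_pos (fun i _ => hlam i) univ_nonempty)
    {x | ∀ j, bsLoad lam c x j ≤ ρbar} (fun _ hx j => ((hx j).trans_lt hρ1).ne) hp hq
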